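/- Let (u,v) be as in the context and let B = B_d(z) be an open ball whose closure is contained in Ω. Then for i = 1, 2: −∫_{∂B} [⟨∇u(x),ν(x)⟩ ∂_i v(x) + ⟨∇v(x),ν(x)⟩ ∂_i u(x)] dσ(x) + ∫_{∂B} ⟨∇u(x),∇v(x)⟩ ν_i(x) dσ(x) = ∫_{∂B} (v(x)^{p+1}/(p+1) + u(x)^{q+1}/(q+1)) ν_i(x) dσ(x). -/

import Mathlib

open MeasureTheory Filter Metric Real
open scoped Topology ENNReal NNReal RealInnerProductSpace

noncomputable section

/-- The plane `ℝ²`. -/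
abbrev E2 : Type := EuclideanSpace ℝ (Fin 2)

/-- The Laplacian of `f : ℝ² → ℝ`, as the sum of the second partial derivatives. -/
def plap (f : E2 → ℝ) (x : E2) : ℝ :=
  ∑ i : Fin 2, fderiv ℝ (fun y => fderiv ℝ f y (EuclideanSpace.single i 1)) x
    (EuclideanSpace.single i 1)

/-- The sup of `|f|` over a set `s`. -/
def supOn (s : Set E2) (f : E2 → ℝ) : ℝ := sSup ((fun x => |f x|) '' s)

/-!
The identity is the conservation law that Noether's theorem attaches to translation invariance.
With `W = v ^ (p + 1) / (p + 1) + u ^ (q + 1) / (q + 1)` the system says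
`∇W = -(Δu ∇v + Δv ∇u)`, which makes the field `(⟪∇u, ∇v⟫ - W) e - (∂ₑv ∇u + ∂ₑu ∇v)` divergence
free for every direction `e`; its flux through `∂B` therefore vanishes, and for `e = eᵢ` this is the
claim.

For the flux, the divergence theorem on the rectangle of polar coordinates shows that the radial
component of a divergence-free field has mean zero along the rotation orbit of each point of the
circle. As the Hausdorff measure of the circle is finite and rotation invariant, averaging over
rotations transfers this to the surface integral.
-/

section Divergence

variable {V : Type*} [NormedAddCommGroup V] [NormedSpace ℝ V]

/-- The divergence of a vector field, defined without coordinates as the trace of its derivative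
(hence `0` by convention if `V` is infinite dimensional). -/
def divergence (X : V → V) (x : V) : ℝ := LinearMap.trace ℝ V (fderiv ℝ X x)

variable {X Y : V → V} {f : V → ℝ} {x : V}

lemma divergence_add (hX : DifferentiableAt ℝ X x) (hY : DifferentiableAt ℝ Y x) :
    divergence (fun y => X y + Y y) x = divergence X x + divergence Y x := by
  simp [divergence, fderiv_fun_add hX hY]

lemma divergence_sub (hX : DifferentiableAt ℝ X x) (hY : DifferentiableAt ℝ Y x) :
    divergence (fun y => X y - Y y) x = divergence X x - divergence Y x := by
  simp [divergence, fderiv_fun_sub hX hY]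

lemma divergence_comp_add_left (a : V) :
    divergence (fun y => X (a + y)) x = divergence X (a + x) := by
  simp [divergence, fderiv_comp_add_left]

variable [FiniteDimensional ℝ V]

lemma divergence_smul (hf : DifferentiableAt ℝ f x) (hX : DifferentiableAt ℝ X x) :
    divergence (fun y => f y • X y) x = f x * divergence X x + fderiv ℝ f x (X x) := by
  simp [divergence, fderiv_fun_smul hf hX]

lemma divergence_smul_const (hf : DifferentiableAt ℝ f x) (e : V) :
    divergence (fun y => f y • e) x = fderiv ℝ f x e := by
  simpa [divergence] using divergence_smul hf (differentiableAt_const e)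

end Divergence

section StressField

variable {V : Type*} [NormedAddCommGroup V] [InnerProductSpace ℝ V]
variable {u v W : V → ℝ} {x : V}

open scoped Gradient

section Complete

variable [CompleteSpace V]

lemma differentiableAt_gradient (hu : ContDiffAt ℝ 2 u x) :
    DifferentiableAt ℝ (∇ u) x :=
  (InnerProductSpace.toDual ℝ V).symm.differentiableAt.comp x
    ((hu.fderiv_right (m := 1) (by norm_num)).differentiableAt one_ne_zero)

lemma inner_fderiv_gradient (hu : DifferentiableAt ℝ (∇ u) x) (a b : V) :
    ⟪fderiv ℝ (∇ u) x a, b⟫ = fderiv ℝ (fun y => fderiv ℝ u y b) x a := by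
  have hpartial : (fun y => fderiv ℝ u y b) = fun y => ⟪∇ u y, b⟫ := by
    simp only [inner_gradient_left]
  rw [hpartial, fderiv_inner_apply ℝ hu (differentiableAt_const b)]
  simp

lemma isSymmetric_fderiv_gradient (hu : ContDiffAt ℝ 2 u x) :
    (fderiv ℝ (∇ u) x : V →ₗ[ℝ] V).IsSymmetric := by
  have hu' : DifferentiableAt ℝ (fderiv ℝ u) x :=
    (hu.fderiv_right (m := 1) (by norm_num)).differentiableAt one_ne_zero
  have hsecond (a b : V) : ⟪fderiv ℝ (∇ u) x a, b⟫ = fderiv ℝ (fderiv ℝ u) x a b := by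
    rw [inner_fderiv_gradient (differentiableAt_gradient hu),
      fderiv_clm_apply hu' (differentiableAt_const b)]
    simp
  have hsymm : IsSymmSndFDerivAt ℝ u x := hu.isSymmSndFDerivAt (by simp)
  intro a b
  rw [real_inner_comm _ a]
  exact (hsecond a b).trans ((hsymm a b).trans (hsecond b a).symm)

/-- The energy-momentum tensor of the Lagrangian density `⟪∇ u, ∇ v⟫ - W`, contracted with the
direction `e`: the vector field whose conservation expresses invariance under translation along `e`.
-/
def stressField (u v W : V → ℝ) (e x : V) : V :=
  (⟪∇ u x, ∇ v x⟫ - W x) • e - (⟪∇ v x, e⟫ • ∇ u x + ⟪∇ u x, e⟫ • ∇ v x)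

lemma differentiableAt_stressField (hu : ContDiffAt ℝ 2 u x) (hv : ContDiffAt ℝ 2 v x)
    (hW : DifferentiableAt ℝ W x) (e : V) : DifferentiableAt ℝ (stressField u v W e) x := by
  have hu' := differentiableAt_gradient hu
  have hv' := differentiableAt_gradient hv
  exact (((hu'.inner ℝ hv').sub hW).smul_const e).sub
    (((hv'.inner ℝ (differentiableAt_const e)).smul hu').add
      ((hu'.inner ℝ (differentiableAt_const e)).smul hv'))

end Complete

lemma divergence_stressField [FiniteDimensional ℝ V] (hu : ContDiffAt ℝ 2 u x)
    (hv : ContDiffAt ℝ 2 v x) (hW : DifferentiableAt ℝ W x) (e : V) :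
    divergence (stressField u v W e) x =
      -(divergence (∇ u) x * ⟪∇ v x, e⟫ + divergence (∇ v) x * ⟪∇ u x, e⟫ + fderiv ℝ W x e) := by
  have hu' := differentiableAt_gradient hu
  have hv' := differentiableAt_gradient hv
  have hu'' : ⟪fderiv ℝ (∇ u) x (∇ v x), e⟫ = ⟪∇ v x, fderiv ℝ (∇ u) x e⟫ :=
    isSymmetric_fderiv_gradient hu _ _
  have hv'' : ⟪fderiv ℝ (∇ v) x (∇ u x), e⟫ = ⟪∇ u x, fderiv ℝ (∇ v) x e⟫ :=
    isSymmetric_fderiv_gradient hv _ _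
  have hue : DifferentiableAt ℝ (fun y => ⟪∇ u y, e⟫) x :=
    hu'.inner ℝ (differentiableAt_const e)
  have hve : DifferentiableAt ℝ (fun y => ⟪∇ v y, e⟫) x :=
    hv'.inner ℝ (differentiableAt_const e)
  have huv : DifferentiableAt ℝ (fun y => ⟪∇ u y, ∇ v y⟫) x := hu'.inner ℝ hv'
  unfold stressField
  rw [divergence_sub (by fun_prop) (by fun_prop), divergence_add (by fun_prop) (by fun_prop),
    divergence_smul_const (by fun_prop), divergence_smul hve hu', divergence_smul hue hv',
    fderiv_fun_sub huv hW, sub_apply, fderiv_inner_apply ℝ hu' hv',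
    fderiv_inner_apply ℝ hu' (differentiableAt_const e),
    fderiv_inner_apply ℝ hv' (differentiableAt_const e), hu'', hv'', real_inner_comm (∇ v x)]
  simp only [inner_gradient_left, fderiv_fun_const, Pi.zero_apply, zero_apply, inner_zero_right]
  ring

end StressField

section Sphere

variable {X F : Type*} [MetricSpace X] [MeasurableSpace X] [BorelSpace X]
  [NormedAddCommGroup F] [NormedSpace ℝ F]

lemma setIntegral_sphere_comp_isometryEquiv {Y : Type*} [MetricSpace Y] [MeasurableSpace Y]
    [BorelSpace Y] (φ : X ≃ᵢ Y) (g : Y → F) (z : X) (r s : ℝ) :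
    ∫ x in sphere z r, g (φ x) ∂μH[s] = ∫ y in sphere (φ z) r, g y ∂μH[s] := by
  rw [← (φ.measurePreserving_hausdorffMeasure s).setIntegral_preimage_emb
    φ.toHomeomorph.measurableEmbedding g, φ.preimage_sphere, φ.symm_apply_apply]

end Sphere

section Plane

open Module
open scoped Gradient

variable {V : Type*} [NormedAddCommGroup V] [InnerProductSpace ℝ V] [Fact (finrank ℝ V = 2)]
  (o : Orientation ℝ V (Fin 2))

attribute [local instance] FiniteDimensional.of_fact_finrank_eq_two

lemma hasDerivAt_rotation (w : V) (t : ℝ) :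
    HasDerivAt (fun s : ℝ => o.rotation s w) (o.rightAngleRotation (o.rotation t w)) t := by
  simp only [Orientation.rotation_apply, Real.Angle.cos_coe, Real.Angle.sin_coe]
  refine (((hasDerivAt_cos t).smul_const w).add
    ((hasDerivAt_sin t).smul_const (o.rightAngleRotation w))).congr_deriv ?_
  simp [add_comm]

lemma continuous_rotation : Continuous fun y : V × ℝ => o.rotation y.2 y.1 := by
  simp only [Orientation.rotation_apply, Real.Angle.cos_coe, Real.Angle.sin_coe]
  fun_prop

lemma lipschitzWith_rotation (w : V) : LipschitzWith ‖w‖₊ fun t : ℝ => o.rotation t w :=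
  lipschitzWith_of_nnnorm_deriv_le (fun t => (hasDerivAt_rotation o w t).differentiableAt)
    fun t => by simp [(hasDerivAt_rotation o w t).deriv]

lemma inner_map_add_inner_map_rightAngleRotation (L : V →ₗ[ℝ] V) (w : V) :
    ⟪L w, w⟫ + ⟪L (o.rightAngleRotation w), o.rightAngleRotation w⟫ =
      ‖w‖ ^ 2 * LinearMap.trace ℝ V L := by
  let b := stdOrthonormalBasis ℝ V
  have hexpand (a : V) : ∑ i, ⟪a, b i⟫ * ⟪a, L (b i)⟫ = ⟪L a, a⟫ := by
    calc ∑ i, ⟪a, b i⟫ * ⟪a, L (b i)⟫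
      _ = ⟪L (∑ i, ⟪b i, a⟫ • b i), a⟫ := by
        simp only [map_sum, map_smul, sum_inner, real_inner_smul_left]
        simp only [real_inner_comm]
      _ = ⟪L a, a⟫ := by rw [b.sum_repr' a]
  rw [← hexpand, ← hexpand, ← Finset.sum_add_distrib, LinearMap.trace_eq_sum_inner L b,
    Finset.mul_sum]
  refine Finset.sum_congr rfl fun i _ => ?_
  simpa using o.inner_mul_inner_add_areaForm_mul_areaForm w (b i) (L (b i))

/-- Polar coordinates on the closed disc of radius `‖w‖` about the origin: `y = (r, t)` is sent to
the point at fraction `r` of the radius and at angle `t` from `w`. -/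
def polarMap (w : V) (y : ℝ × ℝ) : V := y.1 • o.rotation y.2 w

variable {X : V → V} {w : V}

lemma hasFDerivAt_rotation_snd (y : ℝ × ℝ) :
    HasFDerivAt (fun y : ℝ × ℝ => o.rotation y.2 w)
      ((ContinuousLinearMap.snd ℝ ℝ ℝ).smulRight (o.rightAngleRotation (o.rotation y.2 w))) y := by
  refine ((hasDerivAt_rotation o w y.2).hasFDerivAt.comp y
    (hasFDerivAt_snd (𝕜 := ℝ) (p := y))).congr_fderiv ?_
  ext <;> simp

lemma hasFDerivAt_polarMap (y : ℝ × ℝ) :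
    HasFDerivAt (polarMap o w)
      ((ContinuousLinearMap.fst ℝ ℝ ℝ).smulRight (o.rotation y.2 w) +
        (ContinuousLinearMap.snd ℝ ℝ ℝ).smulRight
          (y.1 • o.rightAngleRotation (o.rotation y.2 w))) y := by
  refine (hasFDerivAt_fst.smul (hasFDerivAt_rotation_snd o y)).congr_fderiv ?_
  ext <;> simp

lemma hasFDerivAt_rightAngleRotation_rotation_snd (y : ℝ × ℝ) :
    HasFDerivAt (fun y : ℝ × ℝ => o.rightAngleRotation (o.rotation y.2 w))
      (-(ContinuousLinearMap.snd ℝ ℝ ℝ).smulRight (o.rotation y.2 w)) y := by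
  refine (o.rightAngleRotation.hasFDerivAt.comp y (hasFDerivAt_rotation_snd o y)).congr_fderiv ?_
  ext <;> simp

lemma mapsTo_polarMap :
    Set.MapsTo (polarMap o w) (Set.uIcc 0 1 ×ˢ Set.univ) (closedBall 0 ‖w‖) := by
  rintro y ⟨hy, -⟩
  rw [Set.uIcc_of_le zero_le_one] at hy
  simpa [polarMap, norm_smul, abs_of_nonneg hy.1] using
    mul_le_of_le_one_left (norm_nonneg w) hy.2

/-- The radial component of `X` times the distance to the origin, in polar coordinates: the first
component of the Piola transform of `X` under `polarMap o w`. -/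
def radialFlux (X : V → V) (w : V) (y : ℝ × ℝ) : ℝ := ⟪X (polarMap o w y), polarMap o w y⟫

/-- The angular component of `X` times `‖w‖`, in polar coordinates: the second component of the
Piola transform of `X` under `polarMap o w`. -/
def angularFlux (X : V → V) (w : V) (y : ℝ × ℝ) : ℝ :=
  ⟪X (polarMap o w y), o.rightAngleRotation (o.rotation y.2 w)⟫

variable {y : ℝ × ℝ}

lemma differentiableAt_radialFlux (hX : DifferentiableAt ℝ X (polarMap o w y)) :
    DifferentiableAt ℝ (radialFlux o X w) y :=
  have hpolar := (hasFDerivAt_polarMap o y).differentiableAt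
  (hX.comp y hpolar).inner ℝ hpolar

lemma differentiableAt_angularFlux (hX : DifferentiableAt ℝ X (polarMap o w y)) :
    DifferentiableAt ℝ (angularFlux o X w) y :=
  (hX.comp y (hasFDerivAt_polarMap o y).differentiableAt).inner ℝ
    (hasFDerivAt_rightAngleRotation_rotation_snd o y).differentiableAt

lemma fderiv_radialFlux_add_fderiv_angularFlux (hX : DifferentiableAt ℝ X (polarMap o w y)) :
    fderiv ℝ (radialFlux o X w) y (1, 0) + fderiv ℝ (angularFlux o X w) y (0, 1) =
      y.1 * ‖w‖ ^ 2 * divergence X (polarMap o w y) := by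
  have hpolar := hasFDerivAt_polarMap o (w := w) y
  have hXpolar := hX.hasFDerivAt.comp y hpolar
  have hradial := hXpolar.inner ℝ hpolar
  have hangular := hXpolar.inner ℝ (hasFDerivAt_rightAngleRotation_rotation_snd o (w := w) y)
  have htrace := inner_map_add_inner_map_rightAngleRotation o
    (fderiv ℝ X (polarMap o w y) : V →ₗ[ℝ] V) (o.rotation y.2 w)
  rw [LinearIsometryEquiv.norm_map] at htrace
  rw [show fderiv ℝ (radialFlux o X w) y = _ from hradial.fderiv,
    show fderiv ℝ (angularFlux o X w) y = _ from hangular.fderiv, mul_assoc, divergence, ← htrace]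
  simp only [Function.comp_apply, polarMap, ContinuousLinearMap.comp_add,
    ContinuousLinearMap.comp_apply, ContinuousLinearMap.prod_apply, add_apply, neg_apply,
    ContinuousLinearMap.smulRight_apply, ContinuousLinearMap.coe_fst', ContinuousLinearMap.coe_snd',
    ContinuousLinearMap.coe_coe, fderivInnerCLM_apply, map_smul, map_zero, LinearMap.smul_apply,
    one_smul, zero_smul, add_zero, zero_add, real_inner_smul_right, inner_neg_right,
    Orientation.inner_rightAngleRotation_right, smul_eq_mul]
  ring

lemma continuousOn_mul_divergence_polarMap
    (hdiv : ContinuousOn (divergence X) (closedBall 0 ‖w‖)) :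
    ContinuousOn (fun y : ℝ × ℝ => y.1 * ‖w‖ ^ 2 * divergence X (polarMap o w y))
      (Set.uIcc 0 1 ×ˢ Set.univ) :=
  (continuous_fst.mul continuous_const).continuousOn.mul (hdiv.comp
    (fun y _ => (hasFDerivAt_polarMap o y).continuousAt.continuousWithinAt) (mapsTo_polarMap o))

theorem integral_inner_rotation_eq_integral_divergence
    (hX : ∀ x ∈ closedBall 0 ‖w‖, DifferentiableAt ℝ X x)
    (hdiv : ContinuousOn (divergence X) (closedBall 0 ‖w‖)) :
    ∫ t in (0 : ℝ)..2 * π, ⟪X (o.rotation t w), o.rotation t w⟫ =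
      ∫ r in (0 : ℝ)..1, ∫ t in (0 : ℝ)..2 * π,
        r * ‖w‖ ^ 2 * divergence X (polarMap o w (r, t)) := by
  let R : Set (ℝ × ℝ) := Set.uIcc 0 1 ×ˢ Set.uIcc 0 (2 * π)
  have hR : R ⊆ Set.uIcc 0 1 ×ˢ Set.univ := Set.prod_mono_right (Set.subset_univ _)
  have hinterior : Set.Ioo (min 0 1) (max 0 1) ×ˢ Set.Ioo (min 0 (2 * π)) (max 0 (2 * π)) ⊆ R :=
    Set.prod_mono Set.Ioo_subset_Icc_self Set.Ioo_subset_Icc_self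
  have hXpolar (y) (hy : y ∈ R) : DifferentiableAt ℝ X (polarMap o w y) :=
    hX _ (mapsTo_polarMap o (hR hy))
  have hradial y hy := differentiableAt_radialFlux o (hXpolar y hy)
  have hangular y hy := differentiableAt_angularFlux o (hXpolar y hy)
  have hdiv_eq y hy := fderiv_radialFlux_add_fderiv_angularFlux o (hXpolar y hy)
  have hint : IntegrableOn (fun y => fderiv ℝ (radialFlux o X w) y (1, 0) +
      fderiv ℝ (angularFlux o X w) y (0, 1)) R :=
    (((continuousOn_mul_divergence_polarMap o hdiv).mono hR).integrableOn_compact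
      (isCompact_uIcc.prod isCompact_uIcc)).congr_fun
        (fun y hy => (hdiv_eq y hy).symm) (measurableSet_uIcc.prod measurableSet_uIcc)
  have hperiodic (r : ℝ) : angularFlux o X w (r, 2 * π) = angularFlux o X w (r, 0) := by
    simp [angularFlux, polarMap]
  calc ∫ t in (0 : ℝ)..2 * π, ⟪X (o.rotation t w), o.rotation t w⟫
    _ = ∫ r in (0 : ℝ)..1, ∫ t in (0 : ℝ)..2 * π, fderiv ℝ (radialFlux o X w) (r, t) (1, 0) +
          fderiv ℝ (angularFlux o X w) (r, t) (0, 1) := by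
      rw [integral2_divergence_prod_of_hasFDerivAt (radialFlux o X w) (angularFlux o X w) _ _
        0 0 1 (2 * π) (fun y hy => (hradial y hy).continuousAt.continuousWithinAt)
        (fun y hy => (hangular y hy).continuousAt.continuousWithinAt)
        (fun y hy => (hradial y (hinterior hy)).hasFDerivAt)
        (fun y hy => (hangular y (hinterior hy)).hasFDerivAt) hint]
      simp [hperiodic, radialFlux, polarMap]
    _ = _ := intervalIntegral.integral_congr fun r hr =>
      intervalIntegral.integral_congr fun t ht => hdiv_eq (r, t) ⟨hr, ht⟩

variable [MeasurableSpace V] [BorelSpace V]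

lemma hausdorffMeasure_sphere_lt_top (z : V) (r : ℝ) :
    (μH[1] : Measure V) (sphere z r) < ∞ := by
  let o : Orientation ℝ V (Fin 2) := (finBasisOfFinrankEq ℝ V Fact.out).orientation
  obtain hempty | ⟨w, hw⟩ := (sphere z r).eq_empty_or_nonempty
  · simp [hempty]
  have hcover : sphere z r ⊆ (fun t : ℝ => z + o.rotation t (w - z)) '' Set.Icc (-π) π := by
    intro x hx
    have hnorm : ‖w - z‖ = ‖x - z‖ := by
      rw [← dist_eq_norm, ← dist_eq_norm, mem_sphere.1 hw, mem_sphere.1 hx]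
    refine ⟨(o.oangle (w - z) (x - z)).toReal,
      ⟨(Real.Angle.neg_pi_lt_toReal _).le, Real.Angle.toReal_le_pi _⟩, ?_⟩
    simp [(o.rotation_oangle_eq_iff_norm_eq _ _).2 hnorm]
  have hlip : LipschitzWith ‖w - z‖₊ fun t : ℝ => z + o.rotation t (w - z) := by
    simpa using (LipschitzWith.const z).add (lipschitzWith_rotation o (w - z))
  calc (μH[1] : Measure V) (sphere z r)
    _ ≤ μH[1] ((fun t : ℝ => z + o.rotation t (w - z)) '' Set.Icc (-π) π) := measure_mono hcover
    _ ≤ ‖w - z‖₊ ^ (1 : ℝ) * μH[1] (Set.Icc (-π) π) :=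
      hlip.hausdorffMeasure_image_le zero_le_one _
    _ < ∞ := by
      rw [hausdorffMeasure_real]
      exact ENNReal.mul_lt_top (by simp) (by simp)

instance isFiniteMeasure_restrict_sphere (z : V) (r : ℝ) :
    IsFiniteMeasure ((μH[1] : Measure V).restrict (sphere z r)) :=
  ⟨by simpa using hausdorffMeasure_sphere_lt_top z r⟩

lemma integrableOn_sphere {F : Type*} [NormedAddCommGroup F] {g : V → F} {z : V} {r : ℝ}
    (hg : ContinuousOn g (sphere z r)) : IntegrableOn g (sphere z r) μH[1] :=
  hg.integrableOn_of_subset_isCompact (isCompact_sphere z r) isClosed_sphere.measurableSet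
    subset_rfl (hausdorffMeasure_sphere_lt_top z r).ne

lemma integrable_comp_rotation {F : Type*} [NormedAddCommGroup F]
    {g : V → F} {r : ℝ} (hg : ContinuousOn g (sphere 0 r)) (a b : ℝ) :
    Integrable (fun y : V × ℝ => g (o.rotation y.2 y.1))
      ((μH[1].restrict (sphere 0 r)).prod (volume.restrict (Set.Icc a b))) := by
  have hmaps : Set.MapsTo (fun y : V × ℝ => o.rotation y.2 y.1)
      (sphere 0 r ×ˢ Set.Icc a b) (sphere 0 r) := by
    rintro ⟨x, t⟩ ⟨hx, -⟩
    simpa using hx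
  have hint := (hg.comp (continuous_rotation o).continuousOn hmaps).integrableOn_compact
    (μ := (μH[1].restrict (sphere 0 r)).prod (volume.restrict (Set.Icc a b)))
    ((isCompact_sphere 0 r).prod isCompact_Icc)
  rwa [IntegrableOn, ← Measure.prod_restrict, Measure.restrict_restrict_of_subset subset_rfl,
    Measure.restrict_restrict_of_subset subset_rfl] at hint

lemma setIntegral_sphere_integral_rotation {F : Type*}
    [NormedAddCommGroup F] [NormedSpace ℝ F] [CompleteSpace F] {g : V → F} {r : ℝ}
    (hg : ContinuousOn g (sphere 0 r)) :
    ∫ x in sphere 0 r, (∫ t in (0 : ℝ)..2 * π, g (o.rotation t x)) ∂μH[1] =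
      (2 * π) • ∫ x in sphere 0 r, g x ∂μH[1] := by
  have hrot (t : ℝ) : ∫ x in sphere 0 r, g (o.rotation t x) ∂μH[1] =
      ∫ x in sphere 0 r, g x ∂μH[1] := by
    simpa using setIntegral_sphere_comp_isometryEquiv (o.rotation t).toIsometryEquiv g 0 r 1
  simp only [intervalIntegral.integral_of_le two_pi_pos.le, ← integral_Icc_eq_integral_Ioc]
  rw [integral_integral_swap (integrable_comp_rotation o hg 0 (2 * π))]
  simp [hrot, two_pi_pos.le]

lemma setIntegral_sphere_zero_inner_eq_zero {r : ℝ}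
    (hX : ∀ x ∈ closedBall 0 r, DifferentiableAt ℝ X x)
    (hdiv : ∀ x ∈ closedBall 0 r, divergence X x = 0) :
    ∫ x in sphere 0 r, ⟪X x, x⟫ ∂μH[1] = 0 := by
  let o : Orientation ℝ V (Fin 2) := (finBasisOfFinrankEq ℝ V Fact.out).orientation
  have hcircle : ∀ w ∈ sphere (0 : V) r,
      ∫ t in (0 : ℝ)..2 * π, ⟪X (o.rotation t w), o.rotation t w⟫ = 0 := by
    intro w hw
    obtain rfl : ‖w‖ = r := by simpa using hw
    rw [integral_inner_rotation_eq_integral_divergence o hX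
      (continuousOn_const.congr hdiv)]
    refine intervalIntegral.integral_zero_ae (.of_forall fun s hs => ?_)
    refine intervalIntegral.integral_zero_ae (.of_forall fun t _ => ?_)
    rw [hdiv _ (mapsTo_polarMap o ⟨Set.uIoc_subset_uIcc hs, Set.mem_univ _⟩), mul_zero]
  have hcont : ContinuousOn (fun x => ⟪X x, x⟫) (sphere 0 r) := fun x hx =>
    ((hX x (sphere_subset_closedBall hx)).continuousAt.inner continuousAt_id).continuousWithinAt
  have haverage := setIntegral_sphere_integral_rotation o hcont
  rw [setIntegral_eq_zero_of_forall_eq_zero hcircle] at haverage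
  exact (smul_eq_zero.1 haverage.symm).resolve_left two_pi_pos.ne'

theorem setIntegral_sphere_inner_eq_zero {z : V} {r : ℝ}
    (hX : ∀ x ∈ closedBall z r, DifferentiableAt ℝ X x)
    (hdiv : ∀ x ∈ closedBall z r, divergence X x = 0) :
    ∫ x in sphere z r, ⟪X x, x - z⟫ ∂μH[1] = 0 := by
  have hmem {x : V} (hx : x ∈ closedBall 0 r) : z + x ∈ closedBall z r := by simpa using hx
  have htranslate := setIntegral_sphere_comp_isometryEquiv (IsometryEquiv.addLeft z)
    (fun x => ⟪X x, x - z⟫) 0 r 1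
  simp only [IsometryEquiv.addLeft_apply, add_sub_cancel_left, add_zero] at htranslate
  rw [← htranslate]
  exact setIntegral_sphere_zero_inner_eq_zero
    (fun x hx => (differentiableAt_comp_add_left z).2 (hX _ (hmem hx)))
    fun x hx => (divergence_comp_add_left z).trans (hdiv _ (hmem hx))

theorem pohozaev_identity_sphere {u v W : V → ℝ} {z : V} {r : ℝ}
    (hu : ∀ x ∈ closedBall z r, ContDiffAt ℝ 2 u x)
    (hv : ∀ x ∈ closedBall z r, ContDiffAt ℝ 2 v x)
    (hW : ∀ x ∈ closedBall z r, HasFDerivAt W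
      (-(divergence (∇ u) x • fderiv ℝ v x + divergence (∇ v) x • fderiv ℝ u x)) x)
    (e : V) (c : ℝ) :
    -(∫ x in sphere z r, (⟪∇ u x, c • (x - z)⟫ * fderiv ℝ v x e +
          ⟪∇ v x, c • (x - z)⟫ * fderiv ℝ u x e) ∂μH[1]) +
        ∫ x in sphere z r, ⟪∇ u x, ∇ v x⟫ * ⟪e, c • (x - z)⟫ ∂μH[1] =
      ∫ x in sphere z r, W x * ⟪e, c • (x - z)⟫ ∂μH[1] := by
  have hflux : ∫ x in sphere z r, ⟪stressField u v W e x, x - z⟫ ∂μH[1] = 0 := by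
    refine setIntegral_sphere_inner_eq_zero (fun x hx =>
      differentiableAt_stressField (hu x hx) (hv x hx) (hW x hx).differentiableAt e) fun x hx => ?_
    rw [divergence_stressField (hu x hx) (hv x hx) (hW x hx).differentiableAt, (hW x hx).fderiv]
    simp [inner_gradient_left]
  have hu' : ContinuousOn (∇ u) (sphere z r) := fun x hx => (differentiableAt_gradient
    (hu x (sphere_subset_closedBall hx))).continuousAt.continuousWithinAt
  have hv' : ContinuousOn (∇ v) (sphere z r) := fun x hx => (differentiableAt_gradient
    (hv x (sphere_subset_closedBall hx))).continuousAt.continuousWithinAt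
  have hW' : ContinuousOn W (sphere z r) := fun x hx =>
    (hW x (sphere_subset_closedBall hx)).continuousAt.continuousWithinAt
  simp only [← inner_gradient_left]
  rw [← sub_eq_zero, ← integral_neg, ← integral_add, ← integral_sub]
  · calc _ = ∫ x in sphere z r, c * ⟪stressField u v W e x, x - z⟫ ∂μH[1] := by
          congr 1 with x
          simp only [stressField, inner_sub_left, inner_add_left, real_inner_smul_left,
            real_inner_smul_right]
          ring
      _ = 0 := by rw [integral_const_mul, hflux, mul_zero]
  all_goals exact integrableOn_sphere (by fun_prop)

end Plane

lemma divergence_gradient_eq_plap {u : E2 → ℝ} {x : E2} (hu : ContDiffAt ℝ 2 u x) :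
    divergence (gradient u) x = plap u x := by
  rw [divergence, LinearMap.trace_eq_sum_inner _ (EuclideanSpace.basisFun (Fin 2) ℝ), plap]
  refine Finset.sum_congr rfl fun i _ => ?_
  rw [real_inner_comm, EuclideanSpace.basisFun_apply]
  exact inner_fderiv_gradient (differentiableAt_gradient hu) _ _

lemma hasFDerivAt_rpow_add_one_div {E : Type*} [NormedAddCommGroup E] [NormedSpace ℝ E]
    {f : E → ℝ} {f' : E →L[ℝ] ℝ} {x : E} {p : ℝ} (hf : HasFDerivAt f f' x) (hx : f x ≠ 0)
    (hp : p ≠ -1) : HasFDerivAt (fun y => f y ^ (p + 1) / (p + 1)) (f x ^ p • f') x := by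
  have hp' : p + 1 ≠ 0 := fun h => hp (eq_neg_of_add_eq_zero_left h)
  have h := (hf.rpow_const (p := p + 1) (.inl hx)).mul_const (p + 1)⁻¹
  simpa only [div_eq_mul_inv, add_sub_cancel_right, smul_smul, inv_mul_cancel_left₀ hp'] using h

theorem stmt1_general {Ω : Set E2} (hΩ : IsOpen Ω) {p q : ℝ} (hp : p ≠ -1) (hq : q ≠ -1)
    {u v : E2 → ℝ} (hu : ContDiffOn ℝ 2 u Ω) (hv : ContDiffOn ℝ 2 v Ω)
    (hupos : ∀ x ∈ Ω, 0 < u x) (hvpos : ∀ x ∈ Ω, 0 < v x)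
    (hΔu : ∀ x ∈ Ω, -plap u x = v x ^ p) (hΔv : ∀ x ∈ Ω, -plap v x = u x ^ q)
    {z : E2} {d : ℝ} (_hd : 0 < d) (hB : closedBall z d ⊆ Ω) (i : Fin 2) :
    -(∫ x in sphere z d,
        (⟪gradient u x, d⁻¹ • (x - z)⟫ * fderiv ℝ v x (EuclideanSpace.single i 1) +
          ⟪gradient v x, d⁻¹ • (x - z)⟫ * fderiv ℝ u x (EuclideanSpace.single i 1)) ∂μH[1]) +
      (∫ x in sphere z d, ⟪gradient u x, gradient v x⟫ * (d⁻¹ * (x i - z i)) ∂μH[1]) =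
    ∫ x in sphere z d,
      (v x ^ (p + 1) / (p + 1) + u x ^ (q + 1) / (q + 1)) * (d⁻¹ * (x i - z i)) ∂μH[1] := by
  have hu' x (hx : x ∈ Ω) : ContDiffAt ℝ 2 u x := hu.contDiffAt (hΩ.mem_nhds hx)
  have hv' x (hx : x ∈ Ω) : ContDiffAt ℝ 2 v x := hv.contDiffAt (hΩ.mem_nhds hx)
  have hW x (hx : x ∈ Ω) :
      HasFDerivAt (fun y => v y ^ (p + 1) / (p + 1) + u y ^ (q + 1) / (q + 1))
        (-(divergence (gradient u) x • fderiv ℝ v x + divergence (gradient v) x • fderiv ℝ u x))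
        x := by
    rw [divergence_gradient_eq_plap (hu' x hx), divergence_gradient_eq_plap (hv' x hx), neg_add,
      ← neg_smul, ← neg_smul, hΔu x hx, hΔv x hx]
    exact (hasFDerivAt_rpow_add_one_div ((hv' x hx).differentiableAt two_ne_zero).hasFDerivAt
      (hvpos x hx).ne' hp).add (hasFDerivAt_rpow_add_one_div
        ((hu' x hx).differentiableAt two_ne_zero).hasFDerivAt (hupos x hx).ne' hq)
  have hnormal (x : E2) : ⟪EuclideanSpace.single i 1, d⁻¹ • (x - z)⟫ = d⁻¹ * (x i - z i) := by
    simp [EuclideanSpace.inner_single_left]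
  have : Fact (Module.finrank ℝ E2 = 2) := ⟨finrank_euclideanSpace_fin⟩
  simpa only [hnormal] using pohozaev_identity_sphere (fun x hx => hu' x (hB hx))
    (fun x hx => hv' x (hB hx)) (fun x hx => hW x (hB hx)) (EuclideanSpace.single i 1) d⁻¹

theorem stmt1
    (Ω : Set E2) (hΩo : IsOpen Ω) (hΩb : Bornology.IsBounded Ω) (hΩne : Ω.Nonempty)
    (p q : ℝ) (hp : 0 < p) (hq : 0 < q)
    (u v : E2 → ℝ)
    (huC2 : ContDiffOn ℝ 2 u Ω) (hvC2 : ContDiffOn ℝ 2 v Ω)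
    (hupos : ∀ x ∈ Ω, 0 < u x) (hvpos : ∀ x ∈ Ω, 0 < v x)
    (heq1 : ∀ x ∈ Ω, - plap u x = v x ^ p)
    (heq2 : ∀ x ∈ Ω, - plap v x = u x ^ q)
    (z : E2) (d : ℝ) (hd : 0 < d) (hB : closedBall z d ⊆ Ω)
    (i : Fin 2) :
    -(∫ x in sphere z d,
        (⟪gradient u x, d⁻¹ • (x - z)⟫ * fderiv ℝ v x (EuclideanSpace.single i 1) +
          ⟪gradient v x, d⁻¹ • (x - z)⟫ * fderiv ℝ u x (EuclideanSpace.single i 1)) ∂μH[1]) +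
      (∫ x in sphere z d, ⟪gradient u x, gradient v x⟫ * (d⁻¹ * (x i - z i)) ∂μH[1]) =
    ∫ x in sphere z d,
      (v x ^ (p + 1) / (p + 1) + u x ^ (q + 1) / (q + 1)) * (d⁻¹ * (x i - z i)) ∂μH[1] :=
  stmt1_general hΩo (by linarith) (by linarith) huC2 hvC2 hupos hvpos heq1 heq2 hd hB i
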